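/- arXiv:2512.02149 — 2 statements merged into one kernel-verified Lean document; each statement's English description precedes it below -/
import Mathlib

section
/- Let k ≥ 2 and let D ⊆ R^k be a β-column set. The minimum Hamming distance of the linear simplex β code S_k^β equals q^(s(k−1)): for every nonzero x ∈ R^k the number of g ∈ D with x·g ≠ 0 is at least q^(s(k−1)), and there exists a nonzero x ∈ R^k for which this number is exactly q^(s(k−1)). -/
/-- A β-column set: a finite set `D ⊆ R^k` such that every `g ∈ D` has a unit coordinate,
and every vector of `R^k` with a unit coordinate is `u • g` for a unique unit `u` and a
unique `g ∈ D`. -/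
def IsBetaColumnSet {R : Type} [CommRing R] {k : ℕ} (D : Finset (Fin k → R)) : Prop :=
  (∀ g ∈ D, ∃ i, IsUnit (g i)) ∧
  (∀ w : Fin k → R, (∃ i, IsUnit (w i)) →
    ∃! ug : Rˣ × (Fin k → R), ug.2 ∈ D ∧ w = (ug.1 : R) • ug.2)

/-- Rank-nullity in terms of cardinalities. -/
theorem LinearMap.card_ker_mul_card_range {R M N : Type*} [CommRing R] [AddCommGroup M]
    [AddCommGroup N] [Module R M] [Module R N] (f : M →ₗ[R] N) :
    Nat.card (LinearMap.ker f) * Nat.card (LinearMap.range f) = Nat.card M := by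
  rw [Submodule.card_eq_card_quotient_mul_card (LinearMap.ker f),
    Nat.card_congr f.quotKerEquivRange.toEquiv, mul_comm]

/-- Scaling by units identifies `Rˣ × {g ∈ D | x·g ≠ 0}` with the vectors not orthogonal to `x`,
provided these all have a unit coordinate. -/
theorem IsBetaColumnSet.card_units_mul_card {R : Type} [CommRing R] {k : ℕ} {D : Finset (Fin k → R)}
    (hD : IsBetaColumnSet D) (x : Fin k → R)
    (hx : ∀ w : Fin k → R, x ⬝ᵥ w ≠ 0 → ∃ i, IsUnit (w i)) :
    Nat.card Rˣ * Nat.card {g : Fin k → R // g ∈ D ∧ x ⬝ᵥ g ≠ 0} =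
      Nat.card {w : Fin k → R // x ⬝ᵥ w ≠ 0} := by
  rw [← Nat.card_prod]
  refine Nat.card_eq_of_bijective (fun p => ⟨(p.1 : R) • p.2.1, ?_⟩) ⟨?_, ?_⟩
  · rw [dotProduct_smul, smul_eq_mul, Ne, Units.mul_right_eq_zero]
    exact p.2.2.2
  · rintro ⟨u, g, hg, hgx⟩ ⟨v, h, hh, hhx⟩ heq
    have heq : (u : R) • g = (v : R) • h := congrArg Subtype.val heq
    obtain ⟨i, hi⟩ := hD.1 g hg
    obtain ⟨p, -, hp⟩ := hD.2 ((u : R) • g) ⟨i, by simpa using hi⟩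
    have := (hp (u, g) ⟨hg, rfl⟩).trans (hp (v, h) ⟨hh, heq⟩).symm
    obtain ⟨rfl, rfl⟩ := Prod.mk.inj this
    rfl
  · rintro ⟨w, hw⟩
    obtain ⟨⟨u, g⟩, ⟨hg, hwg⟩, -⟩ := hD.2 w (hx w hw)
    refine ⟨(u, ⟨g, hg, ?_⟩), Subtype.ext hwg.symm⟩
    rintro h0
    apply hw
    rw [hwg, dotProduct_smul]
    simp only [h0, smul_zero]

section ChainRing

variable {R : Type} [CommRing R] [IsLocalRing R] [Finite R] {γ : R}

/-- In a finite local ring with principal maximal ideal `⟨γ⟩`, every nonzero ideal annihilated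
by `γ` has the cardinality of the residue field. -/
theorem Ideal.card_eq_card_quotient_of_mul_eq_zero
    (hmax : IsLocalRing.maximalIdeal R = Ideal.span {γ}) (I : Ideal R) (hI : I ≠ ⊥)
    (hγ : ∀ a ∈ I, γ * a = 0) :
    Nat.card I = Nat.card (R ⧸ Ideal.span ({γ} : Set R)) := by
  have hquot := Submodule.card_eq_card_quotient_mul_card (Ideal.span ({γ} : Set R))
  apply le_antisymm
  · have hker := (LinearMap.toSpanSingleton R R γ).card_ker_mul_card_range
    rw [← LinearMap.span_singleton_eq_range] at hker
    have hle : Nat.card I ≤ Nat.card (LinearMap.ker (LinearMap.toSpanSingleton R R γ)) := by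
      apply Nat.card_mono (Set.toFinite _)
      intro a ha
      simpa [mul_comm] using hγ a ha
    have hpos : 0 < Nat.card (Ideal.span ({γ} : Set R)) := Nat.card_pos
    have heq : Nat.card (LinearMap.ker (LinearMap.toSpanSingleton R R γ)) =
        Nat.card (R ⧸ Ideal.span ({γ} : Set R)) :=
      Nat.eq_of_mul_eq_mul_right hpos (by rw [hker, hquot, mul_comm])
    exact heq ▸ hle
  · obtain ⟨a, ha, ha0⟩ := Submodule.exists_mem_ne_zero_of_ne_bot hI
    have hker : LinearMap.ker (LinearMap.toSpanSingleton R R a) = Ideal.span {γ} := by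
      apply le_antisymm
      · rw [← hmax]
        refine IsLocalRing.le_maximalIdeal fun h => ha0 ?_
        have : (1 : R) ∈ LinearMap.ker (LinearMap.toSpanSingleton R R a) := h ▸ trivial
        simpa using this
      · rw [Ideal.span_singleton_le_iff_mem]
        simpa using hγ a ha
    rw [← hker, Nat.card_congr (LinearMap.toSpanSingleton R R a).quotKerEquivRange.toEquiv]
    apply Nat.card_mono (Set.toFinite _)
    rintro _ ⟨r, rfl⟩
    simpa using I.mul_mem_left r ha

/-- A finite chain ring with residue field of cardinality `q` and nilpotency index `s` has
`q ^ s` elements. -/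
theorem IsLocalRing.card_eq_card_quotient_pow {s : ℕ}
    (hmax : IsLocalRing.maximalIdeal R = Ideal.span {γ}) (hnil : γ ^ s = 0)
    (hne : ∀ j < s, γ ^ j ≠ 0) :
    Nat.card R = Nat.card (R ⧸ Ideal.span ({γ} : Set R)) ^ s := by
  have key : ∀ j ≤ s, Nat.card R =
      Nat.card (R ⧸ Ideal.span ({γ} : Set R)) ^ j * Nat.card (Ideal.span ({γ ^ j} : Set R)) := by
    intro j
    induction j with
    | zero =>
      intro _
      simp [Ideal.span_singleton_one]
    | succ j ih =>
      intro hj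
      rw [ih (by omega), pow_succ, mul_assoc]
      congr 1
      let J : Ideal R := Ideal.span {γ ^ j}
      let f : J →ₗ[R] R := LinearMap.lsmul R R γ ∘ₗ J.subtype
      have hmem : γ ^ (s - 1) ∈ J :=
        Ideal.mem_span_singleton.2 (pow_dvd_pow γ (by omega))
      have hker : Nat.card (LinearMap.ker f) = Nat.card (R ⧸ Ideal.span ({γ} : Set R)) := by
        rw [← Ideal.card_eq_card_quotient_of_mul_eq_zero hmax
          ((LinearMap.ker f).map J.subtype)]
        · exact Nat.card_congr
            (Submodule.equivMapOfInjective _ J.injective_subtype _).toEquiv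
        · refine (Submodule.ne_bot_iff _).2 ⟨γ ^ (s - 1), ?_, hne _ (by omega)⟩
          refine ⟨⟨_, hmem⟩, ?_, rfl⟩
          change γ * γ ^ (s - 1) = 0
          rw [← pow_succ', Nat.sub_add_cancel (by omega), hnil]
        · rintro _ ⟨a, ha, rfl⟩
          exact ha
      have hrange : LinearMap.range f = Ideal.span {γ ^ (j + 1)} := by
        ext a
        rw [Ideal.mem_span_singleton]
        constructor
        · rintro ⟨⟨b, hb⟩, rfl⟩
          rw [pow_succ']
          exact mul_dvd_mul_left γ (Ideal.mem_span_singleton.1 hb)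
        · rintro ⟨r, rfl⟩
          refine ⟨⟨γ ^ j * r, Ideal.mem_span_singleton.2 (dvd_mul_right _ _)⟩, ?_⟩
          change γ * (γ ^ j * r) = _
          ring
      rw [← hker, ← hrange, f.card_ker_mul_card_range]
  have h := key s le_rfl
  rwa [hnil, Ideal.span_singleton_eq_bot.2 rfl,
    Nat.card_unique (α := (⊥ : Ideal R)), mul_one] at h

/-- A local ring is the disjoint union of its units and its maximal ideal. -/
theorem IsLocalRing.card_units_add_card_maximalIdeal :
    Nat.card Rˣ + Nat.card (IsLocalRing.maximalIdeal R) = Nat.card R := by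
  classical
  rw [← Nat.card_congr (Equiv.sumCompl fun a : R => IsUnit a), Nat.card_sum]
  exact congrArg (· + _) (Nat.card_congr Submonoid.unitsTypeEquivIsUnitSubmonoid.toEquiv)

/-- A nonzero vector annihilated by `γ` yields a codeword of weight `|R| ^ (k - 1)`. -/
theorem IsBetaColumnSet.card_dotProduct_ne_zero
    (hmax : IsLocalRing.maximalIdeal R = Ideal.span {γ}) {k : ℕ} {D : Finset (Fin k → R)}
    (hD : IsBetaColumnSet D) (hk : 1 ≤ k) {x : Fin k → R} (hx : x ≠ 0) (hγ : γ • x = 0) :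
    Nat.card {g : Fin k → R // g ∈ D ∧ x ⬝ᵥ g ≠ 0} = Nat.card R ^ (k - 1) := by
  have hunit : ∀ w : Fin k → R, x ⬝ᵥ w ≠ 0 → ∃ i, IsUnit (w i) := by
    intro w hw
    by_contra! h
    refine hw (Finset.sum_eq_zero fun i _ => ?_)
    have hi : w i ∈ IsLocalRing.maximalIdeal R := h i
    rw [hmax, Ideal.mem_span_singleton] at hi
    obtain ⟨r, hr⟩ := hi
    have hxi : γ * x i = 0 := congrFun hγ i
    rw [hr, ← mul_assoc, mul_comm (x i), hxi, zero_mul]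
  have hcount := hD.card_units_mul_card x hunit
  let f : (Fin k → R) →ₗ[R] R := dotProductBilin R R x
  have hf : ∀ w, f w = x ⬝ᵥ w := fun _ => rfl
  have hrange : Nat.card (LinearMap.range f) = Nat.card (R ⧸ Ideal.span ({γ} : Set R)) := by
    apply Ideal.card_eq_card_quotient_of_mul_eq_zero hmax
    · obtain ⟨i, hi⟩ := Function.ne_iff.1 hx
      refine (Submodule.ne_bot_iff _).2 ⟨x i, ⟨Pi.single i 1, ?_⟩, hi⟩
      simp [hf]
    · rintro _ ⟨w, rfl⟩
      rw [hf, ← smul_eq_mul, ← smul_dotProduct, hγ, zero_dotProduct]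
  have hker := f.card_ker_mul_card_range
  have hsplit : Nat.card (LinearMap.ker f) + Nat.card {w : Fin k → R // x ⬝ᵥ w ≠ 0} =
      Nat.card (Fin k → R) := by
    classical
    rw [← Nat.card_sum]
    exact Nat.card_congr (Equiv.sumCompl fun w => x ⬝ᵥ w = 0)
  have hunits := IsLocalRing.card_units_add_card_maximalIdeal (R := R)
  have hquot := Submodule.card_eq_card_quotient_mul_card (Ideal.span ({γ} : Set R))
  rw [hmax] at hunits
  have hcard : Nat.card (Fin k → R) = Nat.card R ^ (k - 1) * Nat.card R := by
    rw [← pow_succ, Nat.sub_add_cancel hk, Nat.card_fun, Nat.card_fin]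
  rw [hrange, hcard] at hker
  rw [hcard] at hsplit
  have hq : 0 < Nat.card (R ⧸ Ideal.span ({γ} : Set R)) :=
    have := Finite.of_surjective _ (Ideal.Quotient.mk_surjective (I := Ideal.span ({γ} : Set R)))
    Nat.card_pos
  have hK : Nat.card (LinearMap.ker f) =
      Nat.card R ^ (k - 1) * Nat.card (Ideal.span ({γ} : Set R)) := by
    apply Nat.eq_of_mul_eq_mul_right hq
    rw [hker, mul_assoc, ← hquot]
  have hU : 0 < Nat.card Rˣ := Nat.card_pos
  apply Nat.eq_of_mul_eq_mul_left hU
  rw [hcount]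
  have hexp := congrArg (Nat.card R ^ (k - 1) * ·) hunits
  simp only [mul_add] at hexp
  rw [mul_comm (Nat.card Rˣ)]
  omega

end ChainRing

/-- For `k ≥ 2` and a β-column set `D ⊆ R^k`, the minimum Hamming distance of
the linear simplex β code `S_k^β` equals `q^(s(k−1))`: every nonzero `x ∈ R^k` gives at
least `q^(s(k−1))` indices `g ∈ D` with `x·g ≠ 0`, and some nonzero `x` attains exactly
`q^(s(k−1))`. -/
theorem stmt_13
    (R : Type) [CommRing R] [IsLocalRing R] [Fintype R]
    (γ : R) (s q : ℕ)
    (hs : 1 ≤ s)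
    (hmax : IsLocalRing.maximalIdeal R = Ideal.span {γ})
    (hnil : γ ^ s = 0)
    (hnil' : 2 ≤ s → γ ^ (s - 1) ≠ 0)
    (hq : Nat.card (R ⧸ Ideal.span ({γ} : Set R)) = q)
    (k : ℕ) (hk : 2 ≤ k)
    (D : Finset (Fin k → R)) (hD : IsBetaColumnSet D) :
    (∀ x : Fin k → R, x ≠ 0 →
      q ^ (s * (k - 1)) ≤ Nat.card {g : Fin k → R // g ∈ D ∧ ∑ i, x i * g i ≠ 0}) ∧
    (∃ x : Fin k → R, x ≠ 0 ∧
      Nat.card {g : Fin k → R // g ∈ D ∧ ∑ i, x i * g i ≠ 0} = q ^ (s * (k - 1))) := by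
  have hR : Nat.card R = q ^ s := by
    rw [← hq]
    refine IsLocalRing.card_eq_card_quotient_pow hmax hnil fun j hj h0 => ?_
    rcases Nat.lt_or_ge s 2 with h | h
    · obtain rfl : j = 0 := by omega
      simp at h0
    · exact hnil' h (pow_eq_zero_of_le (by omega) h0)
  have hweight : ∀ x : Fin k → R, x ≠ 0 → γ • x = 0 →
      Nat.card {g : Fin k → R // g ∈ D ∧ ∑ i, x i * g i ≠ 0} = q ^ (s * (k - 1)) := by
    intro x hx hγ
    rw [pow_mul, ← hR]
    exact hD.card_dotProduct_ne_zero hmax (by omega) hx hγ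
  have hsocle : ∀ x : Fin k → R, x ≠ 0 → ∃ m, γ ^ m • x ≠ 0 ∧ γ • γ ^ m • x = 0 := by
    classical
    intro x hx
    have hex : ∃ m, γ ^ m • x = 0 := ⟨s, by rw [hnil, zero_smul]⟩
    have hpos : Nat.find hex ≠ 0 := fun h => hx (by simpa [h] using Nat.find_spec hex)
    refine ⟨Nat.find hex - 1, Nat.find_min hex (by omega), ?_⟩
    rw [smul_smul, ← pow_succ', Nat.sub_add_cancel (by omega)]
    exact Nat.find_spec hex
  constructor
  · intro x hx
    obtain ⟨m, hm, hγm⟩ := hsocle x hx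
    rw [← hweight _ hm hγm]
    refine Nat.card_mono (Set.toFinite _) fun g hg => ⟨hg.1, fun h0 => hg.2 ?_⟩
    simp only [Pi.smul_apply, smul_eq_mul, mul_assoc, ← Finset.mul_sum, h0, mul_zero]
  · have : NeZero k := ⟨by omega⟩
    obtain ⟨m, hm, hγm⟩ := hsocle 1 one_ne_zero
    exact ⟨_, hm, hweight _ hm hγm⟩
end

section
/- Let k ≥ 2 and let D ⊆ R^k be a β-column set. For each j ∈ {0,…,s−1}, the number of x ∈ R^k whose codeword (x·g)_{g∈D} in S_k^β has Hamming weight exactly L_β(k) − q^j·L_β(k−1) equals q^(k(s−j)) − q^(k(s−j−1)), and the only x giving Hamming weight 0 is x = 0. -/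
/-- `L_β(j) = q^((s−1)(j−1))·(q^j − 1)/(q − 1)`, written via the geometric sum. -/
def Lbeta (q s j : ℕ) : ℕ := q ^ ((s - 1) * (j - 1)) * ∑ i ∈ Finset.range j, q ^ i

open AddSubgroup

section CommRing

variable {R : Type*} [CommRing R] {γ : R} {s : ℕ}

/-- The additive subgroup of vectors all of whose coordinates are divisible by `a`. -/
def divVectors (k : ℕ) (a : R) : AddSubgroup (Fin k → R) :=
  AddSubgroup.pi Set.univ fun _ => (Ideal.span {a}).toAddSubgroup

theorem mem_divVectors {k : ℕ} {a : R} {x : Fin k → R} :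
    x ∈ divVectors k a ↔ ∀ i, a ∣ x i := by
  simp [divVectors, AddSubgroup.mem_pi, Ideal.mem_span_singleton]

theorem card_divVectors [Finite R] (k : ℕ) (a : R) :
    Nat.card (divVectors k a) = Nat.card (Ideal.span {a}) ^ k := by
  let e : divVectors k a ≃ (Fin k → Ideal.span {a}) :=
    { toFun := fun x i => ⟨x.1 i, Ideal.mem_span_singleton.2 (mem_divVectors.1 x.2 i)⟩
      invFun := fun y => ⟨fun i => (y i).1,
        mem_divVectors.2 fun i => Ideal.mem_span_singleton.1 (y i).2⟩
      left_inv := fun _ => rfl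
      right_inv := fun _ => rfl }
  rw [Nat.card_congr e, Nat.card_fun, Nat.card_fin]

/-- The scalar product with `x`, as an additive map. -/
def dotHom {k : ℕ} (x : Fin k → R) : (Fin k → R) →+ R where
  toFun w := ∑ i, x i * w i
  map_zero' := by simp
  map_add' v w := by simp [mul_add, Finset.sum_add_distrib]

theorem dotHom_apply {k : ℕ} (x w : Fin k → R) : dotHom x w = ∑ i, x i * w i := rfl

theorem card_inf_ker_mul_card_map {A B : Type*} [AddGroup A] [AddGroup B] (f : A →+ B)
    (M : AddSubgroup A) :
    Nat.card ↥(M ⊓ f.ker) * Nat.card (M.map f) = Nat.card M := by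
  rw [← relIndex_ker, ← inf_relIndex_left, ← relIndex_bot_left, ← relIndex_bot_left]
  exact relIndex_mul_relIndex _ _ _ bot_le inf_le_left

theorem exists_level {k : ℕ} (hnil : γ ^ s = 0) {x : Fin k → R} (hx : x ≠ 0) :
    ∃ j < s, x ∈ divVectors k (γ ^ j) ∧ x ∉ divVectors k (γ ^ (j + 1)) := by
  by_contra! h
  apply hx
  have key : ∀ j ≤ s, x ∈ divVectors k (γ ^ j) := by
    intro j
    induction j with
    | zero => intro _; simp [mem_divVectors]
    | succ j ih => exact fun hj => h j hj (ih (by omega))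
  funext i
  simpa [hnil] using mem_divVectors.1 (key s le_rfl) i


end CommRing

theorem card_notMem_and_mem_add_card_inf {A : Type*} [AddGroup A] [Finite A]
    (H M : AddSubgroup A) :
    Nat.card {w : A // w ∉ M ∧ w ∈ H} + Nat.card ↥(M ⊓ H) = Nat.card H := by
  have h := Set.ncard_sdiff_add_ncard_of_subset (s := ((M ⊓ H : AddSubgroup A) : Set A))
    (t := (H : Set A)) (fun w hw => hw.2) (Set.toFinite _)
  rw [← Nat.card_coe_set_eq, ← Nat.card_coe_set_eq, ← Nat.card_coe_set_eq] at h
  refine Eq.trans (congrArg (· + _) (Nat.card_congr (Equiv.subtypeEquivRight fun w => ?_))) h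
  simp only [Set.mem_sdiff, SetLike.mem_coe, AddSubgroup.mem_inf]
  tauto

theorem IsBetaColumnSet.card_units_mul {R : Type} [CommRing R] {k : ℕ} {D : Finset (Fin k → R)}
    (hD : IsBetaColumnSet D) {P : (Fin k → R) → Prop}
    (hP : ∀ (u : Rˣ) w, P ((u : R) • w) ↔ P w) :
    Nat.card Rˣ * Nat.card {g // g ∈ D ∧ P g} =
      Nat.card {w : Fin k → R // (∃ i, IsUnit (w i)) ∧ P w} := by
  rw [← Nat.card_prod]
  refine Nat.card_congr (Equiv.ofBijective
    (fun p : Rˣ × {g // g ∈ D ∧ P g} => ⟨(p.1 : R) • p.2.1, ?_, (hP _ _).2 p.2.2.2⟩) ⟨?_, ?_⟩)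
  · obtain ⟨i, hi⟩ := hD.1 _ p.2.2.1
    exact ⟨i, p.1.isUnit.mul hi⟩
  · rintro ⟨u, g, hg, hPg⟩ ⟨v, h, hh, hPh⟩ heq
    have heq' : (u : R) • g = (v : R) • h := congrArg Subtype.val heq
    obtain ⟨i, hi⟩ := hD.1 g hg
    have := (hD.2 ((u : R) • g) ⟨i, u.isUnit.mul hi⟩).unique (y₁ := (u, g)) (y₂ := (v, h))
      ⟨hg, rfl⟩ ⟨hh, heq'⟩
    simp only [Prod.mk.injEq] at this
    obtain ⟨rfl, rfl⟩ := this
    rfl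
  · rintro ⟨w, hw, hPw⟩
    obtain ⟨⟨u, g⟩, ⟨hg, rfl⟩, -⟩ := hD.2 w hw
    exact ⟨(u, ⟨g, hg, (hP u g).1 hPw⟩), rfl⟩

theorem Lbeta_mul_sub (q t m : ℕ) (hm : 1 ≤ m) :
    ((q : ℤ) ^ (t + 1) - q ^ t) * Lbeta q (t + 1) m = q ^ ((t + 1) * m) - q ^ (t * m) := by
  obtain ⟨n, rfl⟩ := Nat.exists_eq_add_of_le' hm
  have h := geom_sum_mul (q : ℤ) (n + 1)
  simp only [Lbeta, Nat.add_sub_cancel]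
  push_cast
  linear_combination ((q : ℤ) ^ t * q ^ (t * n)) * h

theorem eq_pow_mul_Lbeta {q t m j U Z : ℕ} (hq : 2 ≤ q) (hm : 1 ≤ m)
    (hU : U + q ^ t = q ^ (t + 1)) (hZ : U * Z + q ^ (t * m + j) = q ^ ((t + 1) * m + j)) :
    Z = q ^ j * Lbeta q (t + 1) m := by
  have hU0 : 0 < U := by
    have := Nat.pow_lt_pow_right (a := q) (by omega) (Nat.lt_add_one t)
    omega
  have hL := Lbeta_mul_sub q t m hm
  apply Nat.eq_of_mul_eq_mul_left hU0
  zify at hU hZ ⊢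
  linear_combination hZ - (q : ℤ) ^ j * hL - (q : ℤ) ^ j * Lbeta q (t + 1) m * hU

theorem Lbeta_pos {q s m : ℕ} (hq : 2 ≤ q) (hm : 1 ≤ m) : 0 < Lbeta q s m :=
  Nat.mul_pos (by positivity)
    (Finset.sum_pos (fun _ _ => by positivity) (Finset.nonempty_range_iff.2 (by omega)))

theorem pow_mul_Lbeta_lt {q s k j : ℕ} (hq : 2 ≤ q) (hk : 2 ≤ k) (hj : j < s) :
    q ^ j * Lbeta q s (k - 1) < Lbeta q s k := by
  obtain ⟨n, rfl⟩ := Nat.exists_eq_add_of_le' hk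
  obtain ⟨t, rfl⟩ := Nat.exists_eq_add_of_le' (show 1 ≤ s by omega)
  simp only [Lbeta, Nat.add_sub_cancel, show n + 2 - 1 = n + 1 by omega]
  calc q ^ j * (q ^ (t * n) * ∑ i ∈ Finset.range (n + 1), q ^ i)
      ≤ q ^ t * (q ^ (t * n) * ∑ i ∈ Finset.range (n + 1), q ^ i) :=
        Nat.mul_le_mul_right _ (Nat.pow_le_pow_right (by omega) (by omega))
    _ = q ^ (t * (n + 1)) * ∑ i ∈ Finset.range (n + 1), q ^ i := by ring
    _ < q ^ (t * (n + 1)) * ∑ i ∈ Finset.range (n + 2), q ^ i := by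
        rw [Finset.sum_range_succ _ (n + 1)]
        exact Nat.mul_lt_mul_of_pos_left (Nat.lt_add_of_pos_right (by positivity)) (by positivity)

theorem weight_injective {q s k i j : ℕ} (hq : 2 ≤ q) (hk : 2 ≤ k) (hi : i < s) (hj : j < s)
    (h : Lbeta q s k - q ^ i * Lbeta q s (k - 1) = Lbeta q s k - q ^ j * Lbeta q s (k - 1)) :
    i = j := by
  have h₁ := pow_mul_Lbeta_lt hq hk hi
  have h₂ := pow_mul_Lbeta_lt hq hk hj
  have h₃ : q ^ i * Lbeta q s (k - 1) = q ^ j * Lbeta q s (k - 1) := by omega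
  exact Nat.pow_right_injective hq (Nat.eq_of_mul_eq_mul_right (Lbeta_pos hq (by omega)) h₃)

section IsLocalRing

variable {R : Type*} [CommRing R] [IsLocalRing R] {γ : R} {s : ℕ}

theorem isUnit_iff_not_dvd (hmax : IsLocalRing.maximalIdeal R = Ideal.span {γ}) {r : R} :
    IsUnit r ↔ ¬ γ ∣ r := by
  rw [← Ideal.mem_span_singleton, ← hmax, IsLocalRing.mem_maximalIdeal, mem_nonunits_iff, not_not]

theorem pow_ne_zero_of_lt (hnil' : 2 ≤ s → γ ^ (s - 1) ≠ 0) {j : ℕ} (hj : j < s) :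
    γ ^ j ≠ 0 := by
  obtain rfl | hj0 := Nat.eq_zero_or_pos j
  · simp
  · exact fun h => hnil' (by omega) (pow_eq_zero_of_le (by omega) h)

theorem pow_succ_dvd_pow_mul_iff (hmax : IsLocalRing.maximalIdeal R = Ideal.span {γ})
    {j : ℕ} (hj : γ ^ j ≠ 0) {r : R} : γ ^ (j + 1) ∣ γ ^ j * r ↔ γ ∣ r := by
  refine ⟨fun ⟨t, ht⟩ => ?_, fun h => by rw [pow_succ]; exact mul_dvd_mul_left _ h⟩
  by_contra hr
  have hu : IsUnit (r - γ * t) := by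
    rw [isUnit_iff_not_dvd hmax]
    exact fun h => hr ((dvd_sub_left (dvd_mul_right γ t)).1 h)
  exact hj (hu.mul_left_eq_zero.1 (by rw [mul_sub, ht]; ring))

theorem card_span_pow_eq_mul [Finite R] (hmax : IsLocalRing.maximalIdeal R = Ideal.span {γ})
    {j : ℕ} (hj : γ ^ j ≠ 0) :
    Nat.card (Ideal.span {γ ^ j}) =
      Nat.card (Ideal.span {γ ^ (j + 1)}) * Nat.card (R ⧸ Ideal.span {γ}) := by
  have h := relIndex_comap (Ideal.span {γ ^ (j + 1)}).toAddSubgroup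
    (AddMonoidHom.mulLeft (γ ^ j)) ⊤
  have hc : (Ideal.span {γ ^ (j + 1)}).toAddSubgroup.comap (AddMonoidHom.mulLeft (γ ^ j)) =
      (Ideal.span {γ}).toAddSubgroup := by
    ext r
    simpa [Ideal.mem_span_singleton] using pow_succ_dvd_pow_mul_iff hmax hj
  have hm : (⊤ : AddSubgroup R).map (AddMonoidHom.mulLeft (γ ^ j)) =
      (Ideal.span {γ ^ j}).toAddSubgroup := by
    ext r
    simp [Ideal.mem_span_singleton, dvd_def, eq_comm]
  rw [hc, hm, relIndex_top_right] at h
  have hle : (Ideal.span {γ ^ (j + 1)}).toAddSubgroup ≤ (Ideal.span {γ ^ j}).toAddSubgroup :=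
    fun r hr => Ideal.span_singleton_le_span_singleton.2 (pow_dvd_pow γ j.le_succ) hr
  have h2 := relIndex_mul_relIndex ⊥ _ _ bot_le hle
  rw [relIndex_bot_left, relIndex_bot_left, ← h] at h2
  exact h2.symm

theorem card_span_pow [Finite R] (hmax : IsLocalRing.maximalIdeal R = Ideal.span {γ})
    (hnil : γ ^ s = 0) (hnil' : 2 ≤ s → γ ^ (s - 1) ≠ 0) {j : ℕ} (hj : j ≤ s) :
    Nat.card (Ideal.span {γ ^ j}) = Nat.card (R ⧸ Ideal.span {γ}) ^ (s - j) := by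
  induction hj using Nat.decreasingInduction with
  | self => simp [hnil]
  | of_succ j hj ih =>
    rw [card_span_pow_eq_mul hmax (pow_ne_zero_of_lt hnil' hj), ih, ← pow_succ]
    congr 1
    omega

theorem map_dotHom_divVectors (hmax : IsLocalRing.maximalIdeal R = Ideal.span {γ}) {k j : ℕ}
    {x : Fin k → R} (hx : x ∈ divVectors k (γ ^ j)) (hx' : x ∉ divVectors k (γ ^ (j + 1)))
    (a : ℕ) :
    (divVectors k (γ ^ a)).map (dotHom x) = (Ideal.span {γ ^ (j + a)}).toAddSubgroup := by
  rw [mem_divVectors] at hx hx'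
  push Not at hx'
  obtain ⟨i, hi⟩ := hx'
  obtain ⟨r, hr⟩ := hx i
  have hu : IsUnit r := by
    rw [isUnit_iff_not_dvd hmax]
    intro h
    apply hi
    rw [hr, pow_succ]
    exact mul_dvd_mul_left _ h
  obtain ⟨v, rfl⟩ := hu
  ext b
  simp only [AddSubgroup.mem_map, mem_divVectors, dotHom_apply, Submodule.mem_toAddSubgroup,
    Ideal.mem_span_singleton, pow_add]
  constructor
  · rintro ⟨w, hw, rfl⟩
    exact Finset.dvd_sum fun i _ => mul_dvd_mul (hx i) (hw i)
  · rintro ⟨c, rfl⟩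
    refine ⟨Pi.single i (γ ^ a * (c * ↑v⁻¹)), fun l => ?_, ?_⟩
    · obtain rfl | h := eq_or_ne l i
      · simp
      · simp [h]
    · rw [Finset.sum_eq_single i (fun l _ h => by simp [h]) (by simp), Pi.single_eq_same, hr]
      linear_combination (γ ^ j * γ ^ a * c) * v.mul_inv

theorem exists_isUnit_iff_notMem_divVectors
    (hmax : IsLocalRing.maximalIdeal R = Ideal.span {γ}) {k : ℕ} {w : Fin k → R} :
    (∃ i, IsUnit (w i)) ↔ w ∉ divVectors k γ := by
  simp [mem_divVectors, isUnit_iff_not_dvd hmax]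

theorem card_units_add_card_span [Finite R]
    (hmax : IsLocalRing.maximalIdeal R = Ideal.span {γ}) :
    Nat.card Rˣ + Nat.card (Ideal.span {γ}) = Nat.card R := by
  have h := card_notMem_and_mem_add_card_inf ⊤ (Ideal.span {γ}).toAddSubgroup
  rw [inf_top_eq, AddSubgroup.card_top] at h
  rw [← h]
  refine congrArg (· + _) (Nat.card_congr (Submonoid.unitsTypeEquivIsUnitSubmonoid.toEquiv.trans
    (Equiv.subtypeEquivRight fun w => ?_)))
  simp [IsUnit.mem_submonoid_iff, isUnit_iff_not_dvd hmax, Ideal.mem_span_singleton]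

theorem IsBetaColumnSet.card_units_mul_card_zeros_add {R : Type} [CommRing R] [IsLocalRing R]
    [Finite R] {γ : R} (hmax : IsLocalRing.maximalIdeal R = Ideal.span {γ}) {k : ℕ}
    {D : Finset (Fin k → R)} (hD : IsBetaColumnSet D) (x : Fin k → R) :
    Nat.card Rˣ * Nat.card {g // g ∈ D ∧ ∑ i, x i * g i = 0} +
      Nat.card ↥(divVectors k (γ ^ 1) ⊓ (dotHom x).ker) =
      Nat.card ↥(divVectors k (γ ^ 0) ⊓ (dotHom x).ker) := by
  have htop : divVectors k (γ ^ 0) = ⊤ := by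
    ext w
    simp [mem_divVectors]
  rw [htop, top_inf_eq, pow_one, hD.card_units_mul (fun u w => ?_),
    ← card_notMem_and_mem_add_card_inf (dotHom x).ker (divVectors k γ)]
  · refine congrArg (· + _) (Nat.card_congr (Equiv.subtypeEquivRight fun w => ?_))
    rw [exists_isUnit_iff_notMem_divVectors hmax, AddMonoidHom.mem_ker, dotHom_apply]
  · simp_rw [Pi.smul_apply, smul_eq_mul, mul_left_comm (x _), ← Finset.mul_sum]
    exact u.isUnit.mul_right_eq_zero

theorem two_le_card_quotient [Finite R] (hmax : IsLocalRing.maximalIdeal R = Ideal.span {γ}) :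
    2 ≤ Nat.card (R ⧸ Ideal.span {γ}) := by
  have : Nontrivial (R ⧸ Ideal.span {γ}) :=
    Ideal.Quotient.nontrivial_iff.2 (hmax ▸ (IsLocalRing.maximalIdeal.isMaximal R).ne_top)
  have : Finite (R ⧸ Ideal.span {γ}) := .of_surjective _ Ideal.Quotient.mk_surjective
  exact Finite.one_lt_card

theorem card_units_add_pow [Finite R] {t : ℕ}
    (hmax : IsLocalRing.maximalIdeal R = Ideal.span {γ})
    (hnil : γ ^ (t + 1) = 0) (hnil' : 2 ≤ t + 1 → γ ^ (t + 1 - 1) ≠ 0) :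
    Nat.card Rˣ + Nat.card (R ⧸ Ideal.span {γ}) ^ t =
      Nat.card (R ⧸ Ideal.span {γ}) ^ (t + 1) := by
  have h₀ := card_span_pow hmax hnil hnil' (j := 0) (by omega)
  have h₁ := card_span_pow hmax hnil hnil' (j := 1) (by omega)
  have h := card_units_add_card_span hmax
  rw [pow_one] at h₁
  rw [pow_zero, Ideal.span_singleton_one, Nat.card_congr Submodule.topEquiv.toEquiv] at h₀
  rwa [h₀, h₁] at h

theorem IsBetaColumnSet.card_zeros {R : Type} [CommRing R] [IsLocalRing R]
    [Finite R] {γ : R} {s : ℕ} (hs : 1 ≤ s)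
    (hmax : IsLocalRing.maximalIdeal R = Ideal.span {γ})
    (hnil : γ ^ s = 0) (hnil' : 2 ≤ s → γ ^ (s - 1) ≠ 0) {k : ℕ} (hk : 2 ≤ k)
    {D : Finset (Fin k → R)} (hD : IsBetaColumnSet D) {j : ℕ} (hj : j < s) {x : Fin k → R}
    (hx : x ∈ divVectors k (γ ^ j)) (hx' : x ∉ divVectors k (γ ^ (j + 1))) :
    Nat.card {g // g ∈ D ∧ ∑ i, x i * g i = 0} =
      Nat.card (R ⧸ Ideal.span {γ}) ^ j *
        Lbeta (Nat.card (R ⧸ Ideal.span {γ})) s (k - 1) := by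
  obtain ⟨t, rfl⟩ := Nat.exists_eq_add_of_le' hs
  obtain ⟨m, rfl⟩ := Nat.exists_eq_add_of_le' (show 1 ≤ k by omega)
  have hq := two_le_card_quotient hmax
  have hker (a : ℕ) (ha : a ≤ 1) :
      Nat.card ↥(divVectors (m + 1) (γ ^ a) ⊓ (dotHom x).ker) =
        Nat.card (R ⧸ Ideal.span {γ}) ^ ((t + 1 - a) * m + j) := by
    have h := card_inf_ker_mul_card_map (dotHom x) (divVectors (m + 1) (γ ^ a))
    have hc : Nat.card (Ideal.span {γ ^ (j + a)}).toAddSubgroup = _ :=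
      card_span_pow hmax hnil hnil' (show j + a ≤ t + 1 by omega)
    rw [map_dotHom_divVectors hmax hx hx', card_divVectors, hc,
      card_span_pow hmax hnil hnil' (show a ≤ t + 1 by omega), ← pow_mul] at h
    refine Nat.eq_of_mul_eq_mul_right (pow_pos (by omega) _) (h.trans ?_)
    rw [← pow_add, mul_add, mul_one]
    congr 1
    omega
  have h := hD.card_units_mul_card_zeros_add hmax x
  rw [hker 0 (by omega), hker 1 le_rfl] at h
  exact eq_pow_mul_Lbeta hq (by omega) (card_units_add_pow hmax hnil hnil') h

theorem IsBetaColumnSet.card_eq {R : Type} [CommRing R] [IsLocalRing R]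
    [Finite R] {γ : R} {s : ℕ} (hs : 1 ≤ s)
    (hmax : IsLocalRing.maximalIdeal R = Ideal.span {γ})
    (hnil : γ ^ s = 0) (hnil' : 2 ≤ s → γ ^ (s - 1) ≠ 0) {k : ℕ} (hk : 1 ≤ k)
    {D : Finset (Fin k → R)} (hD : IsBetaColumnSet D) :
    D.card = Lbeta (Nat.card (R ⧸ Ideal.span {γ})) s k := by
  obtain ⟨t, rfl⟩ := Nat.exists_eq_add_of_le' hs
  have hker : (dotHom (0 : Fin k → R)).ker = ⊤ := by
    ext w
    simp [AddMonoidHom.mem_ker, dotHom_apply]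
  have h := hD.card_units_mul_card_zeros_add hmax 0
  simp only [hker, inf_top_eq, card_divVectors, Pi.zero_apply, zero_mul, Finset.sum_const_zero,
    and_true, card_span_pow hmax hnil hnil' (show 0 ≤ t + 1 by omega),
    card_span_pow hmax hnil hnil' (show 1 ≤ t + 1 by omega), ← pow_mul] at h
  rw [Nat.card_eq_fintype_card (α := D), Fintype.card_coe] at h
  simpa using eq_pow_mul_Lbeta (j := 0) (two_le_card_quotient hmax) hk
    (card_units_add_pow hmax hnil hnil') h

theorem card_zeros_add_card_support {R : Type*} [CommRing R] {k : ℕ} (D : Finset (Fin k → R))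
    (x : Fin k → R) :
    Nat.card {g // g ∈ D ∧ ∑ i, x i * g i = 0} + Nat.card {g // g ∈ D ∧ ∑ i, x i * g i ≠ 0} =
      D.card := by
  classical
  rw [← D.card_filter_add_card_filter_not (fun g => ∑ i, x i * g i = 0)]
  congr 1 <;> exact Nat.subtype_card _ (by simp)

end IsLocalRing

/-- Hamming weight distribution of `S_k^β`: for `k ≥ 2`, a β-column set
`D ⊆ R^k`, and each `j ∈ {0,…,s−1}`, exactly `q^(k(s−j)) − q^(k(s−j−1))` elements
`x ∈ R^k` give codewords of Hamming weight `L_β(k) − q^j·L_β(k−1)`, and only `x = 0` gives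
Hamming weight `0`. -/
theorem stmt_14
    (R : Type) [CommRing R] [IsLocalRing R] [Fintype R]
    (γ : R) (s q : ℕ)
    (hs : 1 ≤ s)
    (hmax : IsLocalRing.maximalIdeal R = Ideal.span {γ})
    (hnil : γ ^ s = 0)
    (hnil' : 2 ≤ s → γ ^ (s - 1) ≠ 0)
    (hq : Nat.card (R ⧸ Ideal.span ({γ} : Set R)) = q)
    (k : ℕ) (hk : 2 ≤ k)
    (D : Finset (Fin k → R)) (hD : IsBetaColumnSet D) :
    (∀ j : ℕ, j < s →
      Nat.card {x : Fin k → R //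
          Nat.card {g : Fin k → R // g ∈ D ∧ ∑ i, x i * g i ≠ 0}
            = Lbeta q s k - q ^ j * Lbeta q s (k - 1)}
        = q ^ (k * (s - j)) - q ^ (k * (s - j - 1))) ∧
    (∀ x : Fin k → R,
      Nat.card {g : Fin k → R // g ∈ D ∧ ∑ i, x i * g i ≠ 0} = 0 ↔ x = 0) := by
  subst hq
  have hq := two_le_card_quotient hmax
  have hweight {j : ℕ} (hj : j < s) {x : Fin k → R} (hx : x ∈ divVectors k (γ ^ j))
      (hx' : x ∉ divVectors k (γ ^ (j + 1))) :
      Nat.card {g : Fin k → R // g ∈ D ∧ ∑ i, x i * g i ≠ 0} =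
        Lbeta (Nat.card (R ⧸ Ideal.span {γ})) s k -
          Nat.card (R ⧸ Ideal.span {γ}) ^ j *
            Lbeta (Nat.card (R ⧸ Ideal.span {γ})) s (k - 1) := by
    rw [← hD.card_eq hs hmax hnil hnil' (by omega),
      ← hD.card_zeros hs hmax hnil hnil' hk hj hx hx', ← card_zeros_add_card_support D x,
      Nat.add_sub_cancel_left]
  have hzero (x : Fin k → R) :
      Nat.card {g : Fin k → R // g ∈ D ∧ ∑ i, x i * g i ≠ 0} = 0 ↔ x = 0 := by
    refine ⟨fun h => ?_, fun h => by simp [h]⟩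
    by_contra hx
    obtain ⟨j, hj, hxj, hxj'⟩ := exists_level hnil hx
    rw [hweight hj hxj hxj'] at h
    have := pow_mul_Lbeta_lt hq hk hj
    omega
  refine ⟨fun j hj => ?_, hzero⟩
  have hcard := card_notMem_and_mem_add_card_inf (divVectors k (γ ^ j))
    (divVectors k (γ ^ (j + 1)))
  have hle : divVectors k (γ ^ (j + 1)) ≤ divVectors k (γ ^ j) := fun x hx =>
    mem_divVectors.2 fun i => (pow_dvd_pow γ j.le_succ).trans (mem_divVectors.1 hx i)
  rw [inf_eq_left.2 hle, card_divVectors, card_divVectors, card_span_pow hmax hnil hnil' hj.le,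
    card_span_pow hmax hnil hnil' (Nat.add_one_le_iff.2 hj), ← pow_mul, ← pow_mul,
    mul_comm _ k, mul_comm _ k, ← Nat.sub_sub] at hcard
  rw [← hcard, Nat.add_sub_cancel]
  refine Nat.card_congr (Equiv.subtypeEquivRight fun x =>
    ⟨fun h => ?_, fun h => hweight hj h.2 h.1⟩)
  have hx : x ≠ 0 := fun hx => by
    rw [(hzero x).2 hx] at h
    have := pow_mul_Lbeta_lt hq hk hj
    omega
  obtain ⟨i, hi, hxi, hxi'⟩ := exists_level hnil hx
  rw [hweight hi hxi hxi'] at h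
  obtain rfl := weight_injective hq hk hi hj h
  exact ⟨hxi', hxi⟩
end
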